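/- arXiv:1406.6004 — 4 statements merged into one kernel-verified Lean document; each statement's English description precedes it below -/
import Mathlib

section
/- Let f, g ∈ ℤ[X] be monic polynomials of degree 2 and let φ : ℤ[X]⧸(f) → ℤ[X]⧸(g) be a ring isomorphism. Then there exist ε ∈ {1, −1} and r ∈ ℤ such that φ sends the class of X in ℤ[X]⧸(f) to the class of εX + r in ℤ[X]⧸(g). -/
open Polynomial

/-!
Write `y = a • x + r` for a generator `y` of an algebra with basis `1, x`. Modulo `a` every
polynomial in `y` is a constant; since `x` is such a polynomial, comparing coefficients of `x`
shows that `a` divides `1`.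
-/

section QuadraticAlgebra

variable {R S : Type*} [CommRing R] [Ring S] [Algebra R S]

theorem isUnit_of_mem_adjoin_smul_add_algebraMap {x : S} {a r : R} (ℓ : S →ₗ[R] R)
    (hℓ_one : ℓ 1 = 0) (hℓ_x : ℓ x = 1)
    (hx : x ∈ Algebra.adjoin R {a • x + algebraMap R S r}) : IsUnit a := by
  set y := a • x + algebraMap R S r with hy
  rw [Algebra.adjoin_singleton_eq_range_aeval] at hx
  obtain ⟨p, hp : aeval y p = x⟩ := hx
  obtain ⟨q, hq⟩ : X - C r ∣ p - C (p.eval r) := X_sub_C_dvd_sub_C_eval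
  have x_sub_const : x - p.eval r • 1 = a • (x * aeval y q) := by
    calc x - p.eval r • 1 = aeval y (p - C (p.eval r)) := by
          rw [map_sub, hp, aeval_C, Algebra.algebraMap_eq_smul_one]
      _ = (y - algebraMap R S r) * aeval y q := by rw [hq, map_mul, map_sub, aeval_X, aeval_C]
      _ = a • (x * aeval y q) := by rw [hy, add_sub_cancel_right, smul_mul_assoc]
  have one_eq : 1 = a * ℓ (x * aeval y q) := by
    simpa only [map_sub, map_smul, hℓ_one, hℓ_x, smul_eq_mul, mul_zero, sub_zero] using
      congrArg ℓ x_sub_const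
  exact .of_mul_eq_one _ one_eq.symm

theorem exists_isUnit_eq_smul_add_algebraMap_of_adjoin_eq_top
    (b : Module.Basis (Fin 2) R S) (hb : b 0 = 1) {y : S} (hy : Algebra.adjoin R {y} = ⊤) :
    ∃ a r : R, IsUnit a ∧ y = a • b 1 + algebraMap R S r := by
  have y_eq : y = b.repr y 1 • b 1 + algebraMap R S (b.repr y 0) := by
    rw [Algebra.algebraMap_eq_smul_one, ← hb, add_comm, ← Fin.sum_univ_two fun i ↦ b.repr y i • b i,
      b.sum_repr]
  have coord_one : b.coord 1 1 = 0 := by simp [← hb]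
  have coord_b_one : b.coord 1 (b 1) = 1 := by simp
  have b_one_mem : b 1 ∈ Algebra.adjoin R {b.repr y 1 • b 1 + algebraMap R S (b.repr y 0)} := by
    rw [← y_eq, hy]
    exact Algebra.mem_top
  exact ⟨b.repr y 1, b.repr y 0,
    isUnit_of_mem_adjoin_smul_add_algebraMap (b.coord 1) coord_one coord_b_one b_one_mem, y_eq⟩

end QuadraticAlgebra

theorem adjoin_map_mk_X_eq_top {R S : Type*} [CommRing R] [Semiring S] [Algebra R S]
    {I : Ideal R[X]} {φ : R[X] ⧸ I →ₐ[R] S} (hφ : Function.Surjective φ) :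
    Algebra.adjoin R {φ (Ideal.Quotient.mk I X)} = ⊤ := by
  let ψ : R[X] →ₐ[R] S := φ.comp (Ideal.Quotient.mkₐ R I)
  have hψ : Function.Surjective ψ := hφ.comp Ideal.Quotient.mk_surjective
  calc Algebra.adjoin R {ψ X} = (Algebra.adjoin R {X}).map ψ := (ψ.map_adjoin_singleton X).symm
    _ = ψ.range := by rw [adjoin_X, Algebra.map_top]
    _ = ⊤ := ψ.range_eq_top.mpr hψ

theorem exists_basis_quotient_span_eq_mk_X_pow {R : Type*} [CommRing R] {g : R[X]} {n : ℕ}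
    (hg : g.Monic) (hgd : g.natDegree = n) :
    ∃ b : Module.Basis (Fin n) R (R[X] ⧸ Ideal.span {g}),
      ∀ i, b i = Ideal.Quotient.mk (Ideal.span {g}) X ^ (i : ℕ) := by
  subst hgd
  exact ⟨(AdjoinRoot.powerBasis' hg).basis, (AdjoinRoot.powerBasis' hg).basis_eq_pow⟩

theorem iso_of_monic_quadratic_quotients_sends_X_to_affine_general {R : Type*} [CommRing R]
    {I : Ideal R[X]} {g : R[X]} (hg : g.Monic) (hgd : g.natDegree = 2)
    (φ : (R[X] ⧸ I) →ₐ[R] (R[X] ⧸ Ideal.span {g})) (hφ : Function.Surjective φ) :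
    ∃ ε r : R, IsUnit ε ∧
      φ (Ideal.Quotient.mk I X) = Ideal.Quotient.mk (Ideal.span {g}) (C ε * X + C r) := by
  obtain ⟨b, hb⟩ := exists_basis_quotient_span_eq_mk_X_pow hg hgd
  have b_zero : b 0 = 1 := by simpa using hb 0
  have b_one : b 1 = Ideal.Quotient.mk (Ideal.span {g}) X := by simpa using hb 1
  obtain ⟨ε, r, hε, φ_X⟩ := exists_isUnit_eq_smul_add_algebraMap_of_adjoin_eq_top b b_zero
    (adjoin_map_mk_X_eq_top hφ)
  refine ⟨ε, r, hε, ?_⟩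
  rw [φ_X, b_one, ← smul_eq_C_mul]
  rfl

/-- Any ring isomorphism `ℤ[X]⧸(f) → ℤ[X]⧸(g)` between quotients of
`ℤ[X]` by monic quadratic polynomials sends the class of `X` to the class of
`εX + r` for some `ε ∈ {1, −1}` and `r ∈ ℤ`. -/
theorem iso_of_monic_quadratic_quotients_sends_X_to_affine
    (f g : ℤ[X]) (hf : f.Monic) (hg : g.Monic)
    (hfd : f.natDegree = 2) (hgd : g.natDegree = 2)
    (φ : (ℤ[X] ⧸ Ideal.span {f}) ≃+* (ℤ[X] ⧸ Ideal.span {g})) :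
    ∃ ε r : ℤ, (ε = 1 ∨ ε = -1) ∧
      φ (Ideal.Quotient.mk (Ideal.span {f}) X) =
        Ideal.Quotient.mk (Ideal.span {g}) (C ε * X + C r) := by
  simp only [← Int.isUnit_iff]
  exact iso_of_monic_quadratic_quotients_sends_X_to_affine_general hg hgd
    φ.toRingHom.toIntAlgHom φ.surjective
end

section
/- Let f = X² + bX + c and g = X² + b'X + c' be monic quadratic polynomials in ℤ[X]. Then the rings ℤ[X]⧸(f) and ℤ[X]⧸(g) are isomorphic if and only if b² − 4c = b'² − 4c', i.e., if and only if f and g have the same discriminant. -/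
open Polynomial

/-!
The quotient by `X² + bX + c` is free with basis `1, ω`, and the discriminant of its trace form in
this basis is `b² - 4c`. An isomorphism carries a basis to a basis, and a change of basis multiplies
the discriminant by the square of a unit, which over `ℤ` is `1`. Conversely, if the discriminants
differ by the square of a unit `u`, then `k = (b - u b') / 2` is a root of a monic quadratic with
coefficients in the base ring, so it belongs to that ring when the ring is integrally closed, and
`ω ↦ uω - k` extends to an isomorphism.
-/

open QuadraticAlgebra nonZeroDivisors

variable {R : Type*} [CommRing R]

theorem exists_unit_discr_eq_sq_mul_discr {A ι : Type*} [CommRing A] [Algebra R A]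
    [Fintype ι] [DecidableEq ι] (v w : Module.Basis ι R A) :
    ∃ u : Rˣ, Algebra.discr R v = u ^ 2 * Algebra.discr R w := by
  refine ⟨(w.isUnit_det v).unit, ?_⟩
  rw [IsUnit.unit_spec, w.det_apply, ← Algebra.discr_of_matrix_vecMul, w.toMatrix_map_vecMul]

theorem coe_quadraticAlgebra_basis (a b : R) : ⇑(basis a b) = ![1, ω] := by
  ext i <;> fin_cases i <;> simp [basis]

theorem trace_quadraticAlgebra {a b : R} (z : QuadraticAlgebra R a b) :
    Algebra.trace R (QuadraticAlgebra R a b) z = trace z := by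
  rw [Algebra.trace_eq_matrix_trace (basis a b), Matrix.trace_fin_two]
  simp only [Algebra.leftMulMatrix_eq_repr_mul, coe_quadraticAlgebra_basis, basis_repr_apply,
    Matrix.cons_val_zero, Matrix.cons_val_one, Matrix.cons_val_fin_one, re_mul, im_mul, omega_re,
    omega_im, mul_one, trace_def]
  ring

theorem discr_quadraticAlgebra_basis (a b : R) :
    Algebra.discr R (basis a b) = b ^ 2 + 4 * a := by
  rw [Algebra.discr_def, Matrix.det_fin_two]
  simp only [Algebra.traceMatrix_apply, Algebra.traceForm_apply, trace_quadraticAlgebra, trace_def,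
    coe_quadraticAlgebra_basis, Matrix.cons_val_zero, Matrix.cons_val_one, Matrix.cons_val_fin_one,
    re_mul, im_mul, re_one, im_one, omega_re, omega_im]
  ring

theorem exists_unit_discr_eq_of_quadraticAlgebra_algEquiv {a b a' b' : R}
    (e : QuadraticAlgebra R a b ≃ₐ[R] QuadraticAlgebra R a' b') :
    ∃ u : Rˣ, b ^ 2 + 4 * a = u ^ 2 * (b' ^ 2 + 4 * a') := by
  obtain ⟨u, hu⟩ :=
    exists_unit_discr_eq_sq_mul_discr ((basis a b).map e.toLinearEquiv) (basis a' b')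
  refine ⟨u, ?_⟩
  calc b ^ 2 + 4 * a = Algebra.discr R (e ∘ basis a b) := by
        rw [← Algebra.discr_eq_discr_of_algEquiv, discr_quadraticAlgebra_basis]
    _ = u ^ 2 * (b' ^ 2 + 4 * a') := by
        rw [← discr_quadraticAlgebra_basis, ← hu]
        rfl

/-- The affine change of generator `ω ↦ k + uω` between quadratic algebras. The hypotheses say that
`k + uω` satisfies the equation `x² = a + bx` defining the source. -/
noncomputable def quadraticAlgebraAffineEquiv {a b a' b' : R} (u : Rˣ) (k : R)
    (hb : b = u * b' + 2 * k) (ha : a = u ^ 2 * a' - u * b' * k - k ^ 2) :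
    QuadraticAlgebra R a b ≃ₐ[R] QuadraticAlgebra R a' b' :=
  AlgEquiv.ofAlgHom
    (lift ⟨⟨k, u⟩, by
      ext
      · simp only [re_mul, re_add, re_smul, re_one, smul_eq_mul]
        linear_combination -ha - k * hb
      · simp only [im_mul, im_add, im_smul, im_one, smul_eq_mul]
        linear_combination -u * hb⟩)
    (lift ⟨⟨-(↑u⁻¹ * k), ↑u⁻¹⟩, by
      have hu := u.inv_mul
      ext
      · simp only [re_mul, re_add, re_smul, re_one, smul_eq_mul, ha]
        linear_combination (a' * (↑u⁻¹ * u + 1) - b' * k * ↑u⁻¹) * hu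
      · simp only [im_mul, im_add, im_smul, im_one, smul_eq_mul, hb]
        linear_combination b' * ↑u⁻¹ * hu⟩)
    (algHom_ext (by ext <;> simp))
    (algHom_ext (by ext <;> simp))

theorem dvd_of_sq_eq_mul_add_sq_mul [IsIntegrallyClosed R] {r s p q : R} (hr : r ∈ R⁰)
    (h : s ^ 2 = r * p * s + r ^ 2 * q) : r ∣ s := by
  let K := FractionRing R
  obtain ⟨x, hx⟩ : ∃ x : K, algebraMap R K r * x = algebraMap R K s :=
    ⟨IsLocalization.mk' K s ⟨r, hr⟩, IsLocalization.mk'_spec' K s ⟨r, hr⟩⟩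
  have x_sq : x ^ 2 = algebraMap R K p * x + algebraMap R K q := by
    have hr' : IsUnit (algebraMap R K r ^ 2) := (IsLocalization.map_units K ⟨r, hr⟩).pow 2
    have hK := congrArg (algebraMap R K) h
    simp only [map_add, map_mul, map_pow, ← hx] at hK
    exact hr'.mul_left_cancel (by linear_combination hK)
  have x_integral : IsIntegral R x := by
    refine ⟨X ^ 2 - (C p * X + C q), monic_X_pow_sub (by compute_degree!), ?_⟩
    simp [x_sq]
  obtain ⟨y, rfl⟩ := IsIntegrallyClosed.isIntegral_iff.mp x_integral
  refine ⟨y, IsFractionRing.injective R K ?_⟩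
  rw [map_mul, hx]

theorem quadraticAlgebra_nonempty_algEquiv_iff [IsIntegrallyClosed R] (h2 : (2 : R) ∈ R⁰)
    {a b a' b' : R} :
    Nonempty (QuadraticAlgebra R a b ≃ₐ[R] QuadraticAlgebra R a' b') ↔
      ∃ u : Rˣ, b ^ 2 + 4 * a = u ^ 2 * (b' ^ 2 + 4 * a') := by
  refine ⟨fun ⟨e⟩ ↦ exists_unit_discr_eq_of_quadraticAlgebra_algEquiv e, fun ⟨u, hu⟩ ↦ ?_⟩
  obtain ⟨k, hk⟩ : 2 ∣ b - u * b' :=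
    dvd_of_sq_eq_mul_add_sq_mul (p := -(u * b')) (q := u ^ 2 * a' - a) h2 (by linear_combination hu)
  have hb : b = u * b' + 2 * k := by linear_combination hk
  have h4 : 2 * 2 * a = 2 * 2 * (u ^ 2 * a' - u * b' * k - k ^ 2) := by
    rw [hb] at hu
    linear_combination hu
  exact ⟨quadraticAlgebraAffineEquiv u k hb
    ((mul_cancel_left_mem_nonZeroDivisors (mul_mem h2 h2)).mp h4)⟩

/-- `R[X] ⧸ (X² + bX + c)` as a `QuadraticAlgebra`, the parameters being read off the rewritten
equation `ω² = -c - bω`. -/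
noncomputable def adjoinRootEquivQuadraticAlgebra (b c : R) :
    AdjoinRoot (X ^ 2 + C b * X + C c) ≃ₐ[R] QuadraticAlgebra R (-c) (-b) :=
  AlgEquiv.ofAlgHom
    (AdjoinRoot.liftAlgHom _ (Algebra.ofId R _) omega (by ext <;> simp [pow_two]))
    (lift ⟨AdjoinRoot.root _, by
      have h := AdjoinRoot.eval₂_root (X ^ 2 + C b * X + C c)
      simp only [eval₂_add, eval₂_mul, eval₂_pow, eval₂_X, eval₂_C] at h
      simp only [Algebra.smul_def, AdjoinRoot.algebraMap_eq, map_neg]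
      linear_combination h⟩)
    (algHom_ext (by simp))
    (AdjoinRoot.algHom_ext (by simp))

theorem nonempty_ringEquiv_iff_nonempty_intAlgEquiv {A B : Type*} [Ring A] [Ring B] :
    Nonempty (A ≃+* B) ↔ Nonempty (A ≃ₐ[ℤ] B) :=
  ⟨fun ⟨e⟩ ↦ ⟨e.toIntAlgEquiv⟩, fun ⟨e⟩ ↦ ⟨e.toRingEquiv⟩⟩

theorem monic_quadratic_quotients_iso_iff_discriminant_eq_general [IsIntegrallyClosed R]
    (h2 : (2 : R) ∈ R⁰) (b c b' c' : R) :
    Nonempty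
      ((R[X] ⧸ Ideal.span {(X ^ 2 + C b * X + C c : R[X])}) ≃ₐ[R]
        (R[X] ⧸ Ideal.span {(X ^ 2 + C b' * X + C c' : R[X])})) ↔
      ∃ u : Rˣ, b ^ 2 - 4 * c = u ^ 2 * (b' ^ 2 - 4 * c') := by
  have e := adjoinRootEquivQuadraticAlgebra b c
  have e' := adjoinRootEquivQuadraticAlgebra b' c'
  calc _ ↔ Nonempty (QuadraticAlgebra R (-c) (-b) ≃ₐ[R] QuadraticAlgebra R (-c') (-b')) :=
        (AlgEquiv.equivCongr e e').nonempty_congr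
    _ ↔ _ := by
        rw [quadraticAlgebra_nonempty_algEquiv_iff h2]
        simp only [neg_sq, mul_neg, sub_eq_add_neg]

/-- For monic quadratics `f = X² + bX + c` and `g = X² + b'X + c'` over
`ℤ`, the rings `ℤ[X]⧸(f)` and `ℤ[X]⧸(g)` are isomorphic iff `b² − 4c = b'² − 4c'`,
i.e. iff `f` and `g` have the same discriminant. -/
theorem monic_quadratic_quotients_iso_iff_discriminant_eq
    (b c b' c' : ℤ) :
    Nonempty
      ((ℤ[X] ⧸ Ideal.span {(X ^ 2 + C b * X + C c : ℤ[X])}) ≃+*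
        (ℤ[X] ⧸ Ideal.span {(X ^ 2 + C b' * X + C c' : ℤ[X])})) ↔
      b ^ 2 - 4 * c = b' ^ 2 - 4 * c' := by
  refine (nonempty_ringEquiv_iff_nonempty_intAlgEquiv.trans <|
    monic_quadratic_quotients_iso_iff_discriminant_eq_general
      (mem_nonZeroDivisors_of_ne_zero two_ne_zero) b c b' c').trans ?_
  simp [← Units.val_pow_eq_pow_val, Int.units_sq]
end

section
/- Let A and B be quadratic algebras over ℤ. Let x ∈ A and y ∈ B be integral lifts of generators, with x² = σ·x + τ·1 in A and y² = σ'·y + τ'·1 in B, where σ, τ, σ', τ' ∈ ℤ. Then A and B are isomorphic as rings if and only if σ² + 4τ = σ'² + 4τ'. (The discriminant determines the isomorphism type of a quadratic algebra over ℤ.) -/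
/-!
The discriminant `σ² + 4τ` is the determinant of the trace form in the basis `{1, x}`. A change of
basis multiplies it by the square of a unit, which over `ℤ` is `1`, so it is an invariant.
Conversely, if `σ² + 4τ = σ'² + 4τ'`, then `2` divides `(σ - σ')²`, hence `σ = σ' + 2k` since `2`
is prime, and `y + k` satisfies the same quadratic equation as `x`.
-/

open Module

section InfiniteCyclicQuotient

variable {M : Type*} [AddCommGroup M] {u x : M}

theorem span_pair_eq_top_of_zmultiples_mk_eq_top
    (hx : AddSubgroup.zmultiples (QuotientAddGroup.mk x : M ⧸ AddSubgroup.zmultiples u) = ⊤) :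
    Submodule.span ℤ {u, x} = ⊤ := by
  refine eq_top_iff.2 fun a _ => ?_
  have ha : (QuotientAddGroup.mk a : M ⧸ AddSubgroup.zmultiples u) ∈
      AddSubgroup.zmultiples (QuotientAddGroup.mk x : M ⧸ AddSubgroup.zmultiples u) :=
    hx ▸ AddSubgroup.mem_top _
  obtain ⟨n, hn⟩ := AddSubgroup.mem_zmultiples_iff.1 ha
  rw [← QuotientAddGroup.mk_zsmul, QuotientAddGroup.eq] at hn
  obtain ⟨m, hm⟩ := AddSubgroup.mem_zmultiples_iff.1 hn
  exact Submodule.mem_span_pair.2 ⟨m, n, by rw [hm]; abel⟩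

theorem linearIndependent_pair_of_not_isOfFinAddOrder (hu : ¬IsOfFinAddOrder u)
    (hx : ¬IsOfFinAddOrder (QuotientAddGroup.mk x : M ⧸ AddSubgroup.zmultiples u)) :
    LinearIndependent ℤ ![u, x] := by
  refine LinearIndependent.pair_iff.2 fun s t hst => ?_
  have ht : t = 0 := by
    have mem_zmultiples : t • x ∈ AddSubgroup.zmultiples u :=
      AddSubgroup.mem_zmultiples_iff.2 ⟨-s, by rw [neg_zsmul, neg_eq_of_add_eq_zero_right hst]⟩
    refine injective_zsmul_iff_not_isOfFinAddOrder.2 hx ?_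
    simpa only [zero_zsmul, ← QuotientAddGroup.mk_zsmul, QuotientAddGroup.eq_zero_iff]
  subst ht
  refine ⟨injective_zsmul_iff_not_isOfFinAddOrder.2 hu ?_, rfl⟩
  simpa using hst

theorem exists_basis_eq_pair_of_infinite_quotient [Infinite (M ⧸ AddSubgroup.zmultiples u)]
    (hu : ¬IsOfFinAddOrder u)
    (hx : AddSubgroup.zmultiples (QuotientAddGroup.mk x : M ⧸ AddSubgroup.zmultiples u) = ⊤) :
    ∃ b : Basis (Fin 2) ℤ M, ⇑b = ![u, x] := by
  have hx_order : ¬IsOfFinAddOrder (QuotientAddGroup.mk x : M ⧸ AddSubgroup.zmultiples u) := by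
    rw [← finite_zmultiples, hx]
    exact Set.infinite_univ
  refine ⟨Basis.mk (linearIndependent_pair_of_not_isOfFinAddOrder hu hx_order) ?_,
    Basis.coe_mk _ _⟩
  rw [Matrix.range_cons_cons_empty, span_pair_eq_top_of_zmultiples_mk_eq_top hx]

end InfiniteCyclicQuotient

theorem exists_basis_eq_one_pair_of_quotient_equiv_int {A : Type*} [Ring A] {x : A}
    (hinj : Function.Injective (Int.cast : ℤ → A))
    (hcyc : Nonempty ((A ⧸ AddSubgroup.zmultiples (1 : A)) ≃+ ℤ))
    (hx : AddSubgroup.zmultiples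
      (QuotientAddGroup.mk x : A ⧸ AddSubgroup.zmultiples (1 : A)) = ⊤) :
    ∃ b : Basis (Fin 2) ℤ A, ⇑b = ![1, x] := by
  obtain ⟨e⟩ := hcyc
  have : Infinite (A ⧸ AddSubgroup.zmultiples (1 : A)) := e.toEquiv.infinite_iff.2 inferInstance
  have h_one : ¬IsOfFinAddOrder (1 : A) :=
    injective_zsmul_iff_not_isOfFinAddOrder.1 (by simpa only [zsmul_one] using hinj)
  exact exists_basis_eq_pair_of_infinite_quotient h_one hx

theorem exists_discr_eq_unit_sq_mul_discr {R A ι : Type*} [CommRing R] [CommRing A] [Algebra R A]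
    [Fintype ι] [DecidableEq ι] (b b' : Basis ι R A) :
    ∃ u : Rˣ, Algebra.discr R b = (u : R) ^ 2 * Algebra.discr R b' := by
  have hdet : IsUnit (b'.toMatrix b).det := by
    rw [← b'.det_apply]
    exact b'.isUnit_det b
  refine ⟨hdet.unit, ?_⟩
  rw [IsUnit.unit_spec, ← Algebra.discr_of_matrix_vecMul, Basis.toMatrix_map_vecMul]

section QuadraticGenerator

variable {R A : Type*} [CommRing R] [CommRing A] [Algebra R A] {x : A} {σ τ : R}

theorem trace_eq_of_sq_eq (b : Basis (Fin 2) R A) (hb : ⇑b = ![1, x])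
    (hx : x ^ 2 = σ • x + τ • 1) : Algebra.trace R A x = σ := by
  have hb₀ : b 0 = 1 := by simp [hb]
  have hb₁ : b 1 = x := by simp [hb]
  have h₀ : b.repr x = Finsupp.single 1 1 := hb₁ ▸ b.repr_self 1
  have h₁ : b.repr 1 = Finsupp.single 0 1 := hb₀ ▸ b.repr_self 0
  rw [Algebra.trace_eq_matrix_trace b, Matrix.trace_fin_two]
  simp [Algebra.leftMulMatrix_eq_repr_mul, hb₀, hb₁, ← sq, hx, h₀, h₁]

theorem discr_eq_of_sq_eq (b : Basis (Fin 2) R A) (hb : ⇑b = ![1, x])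
    (hx : x ^ 2 = σ • x + τ • 1) : Algebra.discr R b = σ ^ 2 + 4 * τ := by
  have trace_one : Algebra.trace R A 1 = 2 := by
    simpa using Algebra.trace_algebraMap_of_basis b 1
  have trace_x : Algebra.trace R A x = σ := trace_eq_of_sq_eq b hb hx
  have trace_sq : Algebra.trace R A (x * x) = σ ^ 2 + 2 * τ := by
    rw [← sq, hx, map_add, map_smul, map_smul, trace_x, trace_one]
    simp only [smul_eq_mul]
    ring
  simp only [Algebra.discr_def, Matrix.det_fin_two, Algebra.traceMatrix_apply,
    Algebra.traceForm_apply, hb, Matrix.cons_val_zero, Matrix.cons_val_one, mul_one, one_mul,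
    trace_one, trace_x, trace_sq]
  ring

theorem nonempty_quadraticAlgebra_algEquiv (b : Basis (Fin 2) R A) (hb : ⇑b = ![1, x])
    (hx : x ^ 2 = σ • x + τ • 1) : Nonempty (QuadraticAlgebra R τ σ ≃ₐ[R] A) := by
  let f : QuadraticAlgebra R τ σ →ₐ[R] A :=
    QuadraticAlgebra.lift ⟨x, by rw [← sq, hx, add_comm]⟩
  have hf : ⇑f = ((QuadraticAlgebra.linearEquivTuple τ σ).trans b.equivFun.symm) := by
    ext z
    simp [f, QuadraticAlgebra.lift, Basis.equivFun_symm_apply, hb]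
  exact ⟨AlgEquiv.ofBijective f (hf ▸ LinearEquiv.bijective _)⟩

end QuadraticGenerator

section ChangeOfGenerator

open QuadraticAlgebra

variable {R : Type*} [CommRing R] {a b a' b' : R}

/-- `hb` and `ha` compare coefficients in `(k + vω)² = a + b (k + vω)`, where `ω² = a' + b'ω`. -/
theorem mk_mul_self_eq_of_affine {k v : R} (hb : b = 2 * k + v * b')
    (ha : a = v ^ 2 * a' - k ^ 2 - k * v * b') :
    (⟨k, v⟩ : QuadraticAlgebra R a' b') * ⟨k, v⟩ = a • 1 + b • ⟨k, v⟩ := by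
  subst hb ha
  ext
  · simp only [re_mul, re_add, re_smul, re_one, smul_eq_mul]
    ring
  · simp only [im_mul, im_add, im_smul, im_one, smul_eq_mul]
    ring

theorem nonempty_quadraticAlgebra_algEquiv_of_affine (k : R) (u : Rˣ)
    (hb : b = 2 * k + u * b') (ha : a = u ^ 2 * a' - k ^ 2 - k * u * b') :
    Nonempty (QuadraticAlgebra R a b ≃ₐ[R] QuadraticAlgebra R a' b') := by
  obtain ⟨u, v, huv, hvu⟩ := u
  dsimp only at hb ha
  have hb' : b' = 2 * (-v * k) + v * b := by
    linear_combination -b' * hvu - v * hb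
  have ha' : a' = v ^ 2 * a - (-v * k) ^ 2 - (-v * k) * v * b := by
    rw [ha, hb]
    linear_combination -a' * (v * u + 1) * hvu
  let f : QuadraticAlgebra R a b →ₐ[R] QuadraticAlgebra R a' b' :=
    lift ⟨⟨k, u⟩, mk_mul_self_eq_of_affine hb ha⟩
  let g : QuadraticAlgebra R a' b' →ₐ[R] QuadraticAlgebra R a b :=
    lift ⟨⟨-v * k, v⟩, mk_mul_self_eq_of_affine hb' ha'⟩
  have hfg : f.comp g = AlgHom.id R _ := algHom_ext <| by
    ext <;> simp [f, g, lift, hvu]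
  have hgf : g.comp f = AlgHom.id R _ := algHom_ext <| by
    ext <;> simp [f, g, lift, huv, ← mul_assoc]
  exact ⟨AlgEquiv.ofAlgHom f g hfg hgf⟩

theorem nonempty_quadraticAlgebra_algEquiv_of_discr [IsDomain R] (h2 : Prime (2 : R)) (u : Rˣ)
    (h : b ^ 2 + 4 * a = u ^ 2 * (b' ^ 2 + 4 * a')) :
    Nonempty (QuadraticAlgebra R a b ≃ₐ[R] QuadraticAlgebra R a' b') := by
  have hdvd : 2 ∣ b - u * b' := by
    refine h2.dvd_of_dvd_pow (n := 2) ⟨2 * (u ^ 2 * a' - a) + u * b' * (u * b' - b), ?_⟩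
    linear_combination h
  obtain ⟨k, hk⟩ := hdvd
  have hb : b = 2 * k + u * b' := by linear_combination hk
  refine nonempty_quadraticAlgebra_algEquiv_of_affine k u hb ?_
  have h4 : (2 : R) ^ 2 ≠ 0 := pow_ne_zero 2 h2.ne_zero
  refine mul_left_cancel₀ h4 ?_
  rw [hb] at h
  linear_combination h

end ChangeOfGenerator

theorem quadratic_algebras_iso_iff_discriminant_eq_general
    {R A B : Type*} [CommRing R] [IsDomain R] (h2 : Prime (2 : R))
    [CommRing A] [CommRing B] [Algebra R A] [Algebra R B]
    (bA : Basis (Fin 2) R A) (bB : Basis (Fin 2) R B) {x : A} {y : B}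
    (hA : ⇑bA = ![1, x]) (hB : ⇑bB = ![1, y]) {σ τ σ' τ' : R}
    (hxx : x ^ 2 = σ • x + τ • (1 : A)) (hyy : y ^ 2 = σ' • y + τ' • (1 : B)) :
    Nonempty (A ≃ₐ[R] B) ↔ ∃ u : Rˣ, σ ^ 2 + 4 * τ = u ^ 2 * (σ' ^ 2 + 4 * τ') := by
  constructor
  · rintro ⟨e⟩
    rw [← discr_eq_of_sq_eq bA hA hxx, ← discr_eq_of_sq_eq bB hB hyy,
      Algebra.discr_eq_discr_of_algEquiv (⇑bA) e]
    exact exists_discr_eq_unit_sq_mul_discr (bA.map e.toLinearEquiv) bB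
  · rintro ⟨u, hu⟩
    obtain ⟨eA⟩ := nonempty_quadraticAlgebra_algEquiv bA hA hxx
    obtain ⟨eB⟩ := nonempty_quadraticAlgebra_algEquiv bB hB hyy
    obtain ⟨e⟩ := nonempty_quadraticAlgebra_algEquiv_of_discr h2 u hu
    exact ⟨(eA.symm.trans e).trans eB⟩

/-- The discriminant determines the isomorphism type of a quadratic
algebra over `ℤ`: if `A`, `B` are quadratic algebras over `ℤ`, `x ∈ A`, `y ∈ B`
are integral lifts of generators with `x² = σ·x + τ·1` and `y² = σ'·y + τ'·1`,
then `A ≅ B` as rings iff `σ² + 4τ = σ'² + 4τ'`. -/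
theorem quadratic_algebras_iso_iff_discriminant_eq
    {A B : Type*} [CommRing A] [CommRing B]
    (hinjA : Function.Injective (Int.cast : ℤ → A))
    (hcycA : Nonempty ((A ⧸ AddSubgroup.zmultiples (1 : A)) ≃+ ℤ))
    (hinjB : Function.Injective (Int.cast : ℤ → B))
    (hcycB : Nonempty ((B ⧸ AddSubgroup.zmultiples (1 : B)) ≃+ ℤ))
    (x : A) (y : B)
    (hx : AddSubgroup.zmultiples
      (QuotientAddGroup.mk x : A ⧸ AddSubgroup.zmultiples (1 : A)) = ⊤)
    (hy : AddSubgroup.zmultiples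
      (QuotientAddGroup.mk y : B ⧸ AddSubgroup.zmultiples (1 : B)) = ⊤)
    (σ τ σ' τ' : ℤ)
    (hxx : x ^ 2 = σ • x + τ • (1 : A))
    (hyy : y ^ 2 = σ' • y + τ' • (1 : B)) :
    Nonempty (A ≃+* B) ↔ σ ^ 2 + 4 * τ = σ' ^ 2 + 4 * τ' := by
  obtain ⟨bA, hA⟩ := exists_basis_eq_one_pair_of_quotient_equiv_int hinjA hcycA hx
  obtain ⟨bB, hB⟩ := exists_basis_eq_one_pair_of_quotient_equiv_int hinjB hcycB hy
  have ring_iff_alg : Nonempty (A ≃+* B) ↔ Nonempty (A ≃ₐ[ℤ] B) :=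
    ⟨Nonempty.map RingEquiv.toIntAlgEquiv, Nonempty.map AlgEquiv.toRingEquiv⟩
  rw [ring_iff_alg, quadratic_algebras_iso_iff_discriminant_eq_general
    Int.prime_two bA bB hA hB hxx hyy]
  simp only [← Units.val_pow_eq_pow_val, Int.units_sq, Units.val_one, one_mul, exists_const]
end

section
/- Let R be a commutative ℚ-algebra and let a ∈ R satisfy a·a ≠ 0 and a³ = σ•(a·a) + τ•a for some σ, τ ∈ ℚ. Suppose φ : R → R is a ℚ-algebra homomorphism with φ(a) = −a. Then σ = 0. -/
section NegatedElement

variable {R F : Type*} [Monoid R] [HasDistribNeg R] [FunLike F R R] [MonoidHomClass F R R]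
  {φ : F} {a : R} {n : ℕ}

theorem map_pow_eq_self_of_map_eq_neg (hφ : φ a = -a) (hn : Even n) : φ (a ^ n) = a ^ n := by
  rw [map_pow, hφ, hn.neg_pow]

theorem map_pow_eq_neg_of_map_eq_neg (hφ : φ a = -a) (hn : Odd n) : φ (a ^ n) = -a ^ n := by
  rw [map_pow, hφ, hn.neg_pow]

end NegatedElement

theorem two_nsmul_smul_pow_eq_zero_of_map_eq_neg {K R : Type*} [CommSemiring K] [Ring R]
    [Algebra K R] {φ : R →ₐ[K] R} {a : R} {σ τ : K} {n m k : ℕ} (hφ : φ a = -a)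
    (hn : Odd n) (hm : Even m) (hk : Odd k) (heq : a ^ n = σ • a ^ m + τ • a ^ k) :
    2 • σ • a ^ m = 0 := by
  have hfix : φ (σ • a ^ m) = σ • a ^ m := by
    rw [map_smul, map_pow_eq_self_of_map_eq_neg hφ hm]
  have hneg : φ (σ • a ^ m) = -(σ • a ^ m) :=
    calc
      φ (σ • a ^ m) = φ (a ^ n - τ • a ^ k) := by rw [heq, add_sub_cancel_right]
      _ = -a ^ n - τ • -a ^ k := by
        rw [map_sub, map_smul, map_pow_eq_neg_of_map_eq_neg hφ hn,
          map_pow_eq_neg_of_map_eq_neg hφ hk]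
      _ = -(σ • a ^ m) := by rw [heq, smul_neg, sub_neg_eq_add, neg_add, neg_add_cancel_right]
  rw [two_nsmul, ← eq_neg_iff_add_eq_zero, ← hneg, hfix]

theorem sigma_eq_zero_of_hom_neg_general {K R : Type*} [CommSemiring K] [IsDomain K]
    [NeZero (2 : K)] [Ring R] [Algebra K R] [Module.IsTorsionFree K R] {n m k : ℕ}
    (hn : Odd n) (hm : Even m) (hk : Odd k) (a : R) (σ τ : K) (ha : a ^ m ≠ 0)
    (heq : a ^ n = σ • a ^ m + τ • a ^ k) (φ : R →ₐ[K] R) (hφ : φ a = -a) :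
    σ = 0 := by
  have htwo : (2 : K) • σ • a ^ m = 0 := by
    rw [ofNat_smul_eq_nsmul, two_nsmul_smul_pow_eq_zero_of_map_eq_neg hφ hn hm hk heq]
  have hσ : σ • a ^ m = 0 := (smul_eq_zero_iff_right two_ne_zero).mp htwo
  exact (smul_eq_zero_iff_left ha).mp hσ

/-- Let `R` be a commutative `ℚ`-algebra and `a ∈ R` with `a·a ≠ 0` and
`a³ = σ•(a·a) + τ•a` for some `σ, τ ∈ ℚ`. If a `ℚ`-algebra homomorphism `φ : R → R`
satisfies `φ(a) = −a`, then `σ = 0`. -/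
theorem sigma_eq_zero_of_hom_neg
    {R : Type*} [CommRing R] [Algebra ℚ R] (a : R) (σ τ : ℚ)
    (ha : a * a ≠ 0) (heq : a ^ 3 = σ • (a * a) + τ • a)
    (φ : R →ₐ[ℚ] R) (hφ : φ a = -a) :
    σ = 0 :=
  sigma_eq_zero_of_hom_neg_general (n := 3) (m := 2) (k := 1) (by decide) (by decide) (by decide)
    a σ τ (by rwa [sq]) (by rwa [sq, pow_one]) φ hφ
end
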